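/- One-sided limits of the truncated single-layer integral of E_x: For every a ∈ ℝ, every t > 0 and every δ ∈ (0,t), lim_{x → a⁻} ∫_{t−δ}^{t} E_x(x − a, t − τ) dτ = 1/2 and lim_{x → a⁺} ∫_{t−δ}^{t} E_x(x − a, t − τ) dτ = −1/2. -/

import Mathlib

open MeasureTheory Real Filter Set Topology intervalIntegral

/-- The Wright function `W(z; -β, δ) = ∑ z^k/(k! Γ(δ - βk))`, with `1/Γ` the
entire reciprocal Gamma function (here `Real.Gamma` vanishes at nonpositive
integers, so division gives the correct value `0`). -/
noncomputable def wrightW (β δ z : ℝ) : ℝ :=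
  ∑' k : ℕ, z ^ k / (k.factorial * Real.Gamma (δ - β * k))

/-- Laplace convolution on `(0, ∞)`. -/
noncomputable def laplaceConv (f g : ℝ → ℝ) : ℝ → ℝ :=
  fun t => ∫ τ in (0:ℝ)..t, f τ * g (t - τ)

/-- Iterated Laplace convolution `h₀ ∗ h₁ ∗ ⋯ ∗ hₙ`. -/
noncomputable def iterConv : (n : ℕ) → (Fin (n + 1) → ℝ → ℝ) → ℝ → ℝ
  | 0, h => h 0
  | n + 1, h => laplaceConv (iterConv n (fun i => h i.castSucc)) (h (Fin.last (n + 1)))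

/-- `S^μ_m(t; -ℓ₁, …, -ℓ_m; -α₁, …, -α_m)` with the decomposition `μ₁ = μ`,
`μ_j = 0` for `j ≥ 2`: the Laplace convolution of
`h_j(t) = t^{μ_j - 1} W(-ℓ_j t^{-α_j}; -α_j, μ_j)`.  Indices run over
`Fin (n+1)`, i.e. the number of terms is `m = n + 1 ≥ 1`. -/
noncomputable def Sconv (n : ℕ) (μ : ℝ) (α ℓ : Fin (n + 1) → ℝ) : ℝ → ℝ :=
  iterConv n (fun j t =>
    t ^ ((if j = 0 then μ else 0) - 1) *
      wrightW (α j) (if j = 0 then μ else 0) (-(ℓ j) * t ^ (-(α j))))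

/-- `Γ^μ₁(x,t)`. -/
noncomputable def Gam1 (n : ℕ) (α lam : Fin (n + 1) → ℝ) (μ x t : ℝ) : ℝ :=
  (4 * Real.pi) ^ (-(1/2 : ℝ)) *
    ∫ p in Set.Ioi (0:ℝ),
      p ^ (-(1/2 : ℝ)) * Real.exp (-(|x| ^ 2) / (4 * p)) *
        Sconv n μ α (fun j => lam j * p) t

/-- The kernel `E(x,t) = Γ⁰₁(x,t)`. -/
noncomputable def kerE (n : ℕ) (α lam : Fin (n + 1) → ℝ) (x t : ℝ) : ℝ :=
  Gam1 n α lam 0 x t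

/-- `E_x`, the spatial derivative of `E`. -/
noncomputable def kerEx (n : ℕ) (α lam : Fin (n + 1) → ℝ) (x t : ℝ) : ℝ :=
  deriv (fun y => kerE n α lam y t) x

/-- `E_xx`, the second spatial derivative of `E`. -/
noncomputable def kerExx (n : ℕ) (α lam : Fin (n + 1) → ℝ) (x t : ℝ) : ℝ :=
  deriv (fun y => kerEx n α lam y t) x

/-- The kernel `Z(x,t) = ∑ₖ λₖ Γ^{1-αₖ}₁(x,t)`. -/
noncomputable def kerZ (n : ℕ) (α lam : Fin (n + 1) → ℝ) (x t : ℝ) : ℝ :=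
  ∑ k : Fin (n + 1), lam k * Gam1 n α lam (1 - α k) x t

/-- `Z_x`, the spatial derivative of `Z`. -/
noncomputable def kerZx (n : ℕ) (α lam : Fin (n + 1) → ℝ) (x t : ℝ) : ℝ :=
  deriv (fun y => kerZ n α lam y t) x

/-- `Z_xx`, the second spatial derivative of `Z`. -/
noncomputable def kerZxx (n : ℕ) (α lam : Fin (n + 1) → ℝ) (x t : ℝ) : ℝ :=
  deriv (fun y => kerZx n α lam y t) x

theorem integrableOn_rpow_mul_exp_neg_mul {a b : ℝ} (ha : -1 < a) (hb : 0 < b) :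
    IntegrableOn (fun u : ℝ => u ^ a * rexp (-(b * u))) (Ioi 0) := by
  have := integrableOn_rpow_mul_exp_neg_mul_rpow (p := 1) ha one_pos hb
  simpa only [Real.rpow_one, neg_mul] using this

theorem measurable_ofReal_rpow (a : ℝ) : Measurable fun u : ℝ => ((u ^ a : ℝ) : ℂ) :=
  Complex.measurable_ofReal.comp (measurable_id.pow_const a)

theorem norm_ofReal_rpow_mul_cexp {a u : ℝ} (hu : 0 < u) (r : ℂ) :
    ‖((u ^ a : ℝ) : ℂ) * Complex.exp (-(r * u))‖ = u ^ a * rexp (-(r.re * u)) := by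
  rw [norm_mul, Complex.norm_real, Real.norm_of_nonneg (Real.rpow_nonneg hu.le _),
    Complex.norm_exp, Complex.neg_re, Complex.re_mul_ofReal]

theorem integrableOn_rpow_mul_cexp_neg_mul {a : ℝ} (ha : -1 < a) {r : ℂ} (hr : 0 < r.re) :
    IntegrableOn (fun u : ℝ => ((u ^ a : ℝ) : ℂ) * Complex.exp (-(r * u))) (Ioi 0) := by
  refine (integrableOn_rpow_mul_exp_neg_mul ha hr).mono' ?_ ?_
  · have := measurable_ofReal_rpow a
    exact Measurable.aestronglyMeasurable (by fun_prop)
  · filter_upwards [ae_restrict_mem measurableSet_Ioi] with u hu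
    rw [norm_ofReal_rpow_mul_cexp hu]

theorem differentiableAt_integral_rpow_mul_cexp {a : ℝ} (ha : 0 < a) {r : ℂ} (hr : 0 < r.re) :
    DifferentiableAt ℂ (fun r : ℂ => ∫ u : ℝ in Ioi 0, ((u ^ (a - 1) : ℝ) : ℂ) *
      Complex.exp (-(r * u))) r := by
  have hm := measurable_ofReal_rpow (a - 1)
  have hs : {w : ℂ | r.re / 2 < w.re} ∈ 𝓝 r :=
    (isOpen_lt continuous_const Complex.continuous_re).mem_nhds (half_lt_self hr)
  refine (_root_.hasDerivAt_integral_of_dominated_loc_of_deriv_le (μ := volume.restrict (Ioi 0))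
    (F' := fun w (u : ℝ) => ((u ^ (a - 1) : ℝ) : ℂ) * (Complex.exp (-(w * u)) * (-u)))
    (bound := fun u => u ^ a * rexp (-(r.re / 2 * u))) hs ?_
    ?_ ?_ ?_
    ?_ ?_).2.differentiableAt
  · exact Eventually.of_forall fun w => Measurable.aestronglyMeasurable (by fun_prop)
  · exact integrableOn_rpow_mul_cexp_neg_mul (by linarith) hr
  · exact Measurable.aestronglyMeasurable (by fun_prop)
  · filter_upwards [ae_restrict_mem measurableSet_Ioi] with u hu w hw
    have hu0 : (0 : ℝ) < u := hu
    have hw : r.re / 2 < w.re := hw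
    rw [← mul_assoc, norm_mul, norm_ofReal_rpow_mul_cexp hu, norm_neg, Complex.norm_real,
      Real.norm_of_nonneg hu0.le, mul_right_comm, ← Real.rpow_add_one hu0.ne', sub_add_cancel]
    gcongr
  · exact integrableOn_rpow_mul_exp_neg_mul (by linarith) (by positivity)
  · filter_upwards with u w _
    refine HasDerivAt.const_mul _ (HasDerivAt.cexp ?_)
    exact (hasDerivAt_mul_const (u : ℂ)).fun_neg

/-- The Gamma integral with complex rate in the right half-plane. -/
theorem integral_rpow_mul_cexp_neg_mul {a : ℝ} (ha : 0 < a) {r : ℂ} (hr : 0 < r.re) :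
    ∫ u : ℝ in Ioi 0, ((u ^ (a - 1) : ℝ) : ℂ) * Complex.exp (-(r * u)) =
      (1 / r) ^ (a : ℂ) * Real.Gamma a := by
  have hU : IsOpen {w : ℂ | 0 < w.re} := isOpen_lt continuous_const Complex.continuous_re
  have hne : ∀ w : ℂ, 0 < w.re → w ≠ 0 := fun w hw h => by simp [h] at hw
  have hf : AnalyticOnNhd ℂ (fun r : ℂ => ∫ u : ℝ in Ioi 0, ((u ^ (a - 1) : ℝ) : ℂ) *
      Complex.exp (-(r * u))) {w : ℂ | 0 < w.re} :=
    DifferentiableOn.analyticOnNhd (fun w hw =>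
      (differentiableAt_integral_rpow_mul_cexp ha hw).differentiableWithinAt) hU
  have hg : AnalyticOnNhd ℂ (fun r : ℂ => (1 / r) ^ (a : ℂ) * Real.Gamma a) {w : ℂ | 0 < w.re} := by
    refine DifferentiableOn.analyticOnNhd (fun w hw => ?_) hU
    have hw : 0 < w.re := hw
    refine DifferentiableAt.differentiableWithinAt (DifferentiableAt.mul_const ?_ _)
    refine DifferentiableAt.cpow_const ?_ (Or.inl ?_)
    · exact (differentiableAt_const _).div differentiableAt_id (hne w hw)
    · rw [one_div, Complex.inv_re]
      exact div_pos hw (Complex.normSq_pos.mpr (hne w hw))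
  refine hf.eqOn_of_preconnected_of_frequently_eq hg (convex_halfSpace_re_gt 0).isPreconnected
    (z₀ := 1) (by simp) ?_ hr
  have ht : Tendsto (fun n : ℕ => ((1 + 1 / ((n : ℝ) + 1) : ℝ) : ℂ)) atTop (𝓝[≠] 1) := by
    refine tendsto_nhdsWithin_iff.mpr ⟨?_, Eventually.of_forall fun n => ?_⟩
    · have h1 : Tendsto (fun n : ℕ => 1 + 1 / ((n : ℝ) + 1)) atTop (𝓝 (1 + 0)) :=
        tendsto_const_nhds.add tendsto_one_div_add_atTop_nhds_zero_nat
      have := (Complex.continuous_ofReal.tendsto _).comp h1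
      simpa [Function.comp_def] using this
    · have : (0 : ℝ) < 1 / ((n : ℝ) + 1) := by positivity
      intro h
      have h' : (1 + 1 / ((n : ℝ) + 1) : ℝ) = 1 := Complex.ofReal_injective (by simpa using h)
      linarith
  refine ht.frequently (Eventually.frequently (Eventually.of_forall fun n => ?_))
  have hx : (0 : ℝ) < 1 + 1 / ((n : ℝ) + 1) := by positivity
  generalize (1 + 1 / ((n : ℝ) + 1) : ℝ) = x at hx
  have h := Complex.integral_cpow_mul_exp_neg_mul_Ioi (a := a) (by simpa using ha) hx
  rw [Complex.Gamma_ofReal] at h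
  rw [← h]
  refine setIntegral_congr_fun measurableSet_Ioi fun u hu => ?_
  rw [Complex.ofReal_cpow (le_of_lt hu)]
  push_cast
  simp

theorem integrableOn_exp_neg_mul_add_mul_rpow {α b : ℝ} (hα0 : 0 < α) (hα1 : α < 1) (hb : 0 < b)
    (z : ℝ) : IntegrableOn (fun u : ℝ => rexp (-b * u + z * u ^ α)) (Ioi 0) := by
  refine integrable_of_isBigO_exp_neg (b := b / 2) (by positivity) ?_ ?_
  · exact Continuous.continuousOn
      (Real.continuous_exp.comp ((continuous_const.mul continuous_id).add
        (continuous_const.mul (Real.continuous_rpow_const hα0.le))))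
  · refine Asymptotics.IsBigO.of_bound 1 ?_
    have h := (tendsto_rpow_atTop (sub_pos.mpr hα1)).const_mul_atTop (half_pos hb)
    filter_upwards [h.eventually_ge_atTop z, eventually_gt_atTop 0] with u hu hu0
    have hu1 : z * u ^ α ≤ b / 2 * u := by
      calc z * u ^ α ≤ (b / 2 * u ^ (1 - α)) * u ^ α := by gcongr
        _ = b / 2 * u := by
          rw [mul_assoc, ← Real.rpow_add hu0, sub_add_cancel, Real.rpow_one]
    simp only [Real.norm_eq_abs, Real.abs_exp, one_mul]
    exact Real.exp_le_exp.mpr (by linarith)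

theorem re_cexp_mul_I (φ : ℝ) : (Complex.exp (φ * Complex.I)).re = Real.cos φ := by
  rw [Complex.exp_ofReal_mul_I_re]

theorem re_cexp_neg_mul_I (φ : ℝ) : (Complex.exp (-φ * Complex.I)).re = Real.cos φ := by
  rw [← Complex.ofReal_neg, Complex.exp_ofReal_mul_I_re, Real.cos_neg]

theorem cexp_mul_I_cpow {φ : ℝ} (h1 : -π < φ) (h2 : φ ≤ π) (a : ℂ) :
    Complex.exp (φ * Complex.I) ^ a = Complex.exp (φ * a * Complex.I) := by
  rw [Complex.cpow_def_of_ne_zero (Complex.exp_ne_zero _), Complex.log_exp (by simpa using h1)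
    (by simpa using h2)]
  ring_nf

/-- The Gamma integral along the ray of direction `exp (-iφ)`. -/
theorem integral_rpow_mul_cexp_neg_ray {φ a : ℝ} (h1 : -(π / 2) < φ) (h2 : φ < π / 2)
    (ha : 0 < a) :
    ∫ u : ℝ in Ioi 0, ((u ^ (a - 1) : ℝ) : ℂ) * Complex.exp (-(Complex.exp (-φ * Complex.I) * u)) =
      Complex.exp (φ * a * Complex.I) * Real.Gamma a := by
  rw [integral_rpow_mul_cexp_neg_mul ha
    (by rw [re_cexp_neg_mul_I]; exact Real.cos_pos_of_mem_Ioo ⟨h1, h2⟩), one_div, ← Complex.exp_neg,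
    neg_mul, neg_neg, cexp_mul_I_cpow (by linarith [pi_pos]) (by linarith [pi_pos])]

theorem one_div_Gamma_neg {s : ℝ} (hs : 0 ≤ s) :
    1 / Real.Gamma (-s) = -(1 / π) * (Real.Gamma (1 + s) * Real.sin (π * s)) := by
  have h := Real.Gamma_mul_Gamma_one_sub (-s)
  rw [sub_neg_eq_add] at h
  have hG : 0 < Real.Gamma (1 + s) := Real.Gamma_pos_of_pos (by linarith)
  have h2 : Real.Gamma (-s) = π / Real.sin (π * -s) / Real.Gamma (1 + s) :=
    eq_div_of_mul_eq hG.ne' h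
  rw [h2, mul_neg, Real.sin_neg]
  by_cases h0 : Real.sin (π * s) = 0
  · simp [h0]
  · field_simp

theorem norm_cexp_neg_ray_mul (φ z u v : ℝ) :
    ‖Complex.exp (-(Complex.exp (-φ * Complex.I) * u)) *
      Complex.exp (z * Complex.exp (φ * Complex.I) * v)‖ =
      rexp (-(Real.cos φ * u) + z * Real.cos φ * v) := by
  rw [← Complex.exp_add, Complex.norm_exp]
  congr 1
  rw [Complex.add_re, Complex.neg_re, Complex.re_mul_ofReal, Complex.re_mul_ofReal,
    Complex.re_ofReal_mul, re_cexp_mul_I, re_cexp_neg_mul_I]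

/-- Integral representation of the Wright function with second parameter `0`, along rays on which
both exponentials decay. -/
theorem hasSum_wright {α φ : ℝ} (hα0 : 0 < α) (hα1 : α < 1) (hφ0 : 0 < φ) (hφ1 : φ < π / 2)
    (hφ : φ * (1 + α) = π * α) (z : ℝ) :
    HasSum (fun k : ℕ => z ^ k / (k.factorial * Real.Gamma (0 - α * k)))
      (-(1 / π) * (Complex.exp (-φ * Complex.I) * ∫ u : ℝ in Ioi 0,
        Complex.exp (-(Complex.exp (-φ * Complex.I) * u)) *
          Complex.exp (z * Complex.exp (φ * Complex.I) * ((u ^ α : ℝ) : ℂ))).im) := by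
  have hc : 0 < Real.cos φ := Real.cos_pos_of_mem_Ioo ⟨by linarith, hφ1⟩
  set r := Complex.exp (-φ * Complex.I) with hr
  set κ := Complex.exp (φ * Complex.I) with hκ
  have hκn : ‖κ‖ = 1 := Complex.norm_exp_ofReal_mul_I φ
  let F : ℕ → ℝ → ℂ := fun k u => Complex.exp (-(r * u)) *
    ((z * κ * ((u ^ α : ℝ) : ℂ)) ^ k / k.factorial)
  have hexp : ∀ w : ℂ, HasSum (fun k : ℕ => w ^ k / k.factorial) (Complex.exp w) := fun w => by
    rw [Complex.exp_eq_exp_ℂ]; exact NormedSpace.expSeries_div_hasSum_exp w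
  have hexpr : ∀ w : ℝ, HasSum (fun k : ℕ => w ^ k / k.factorial) (Real.exp w) := fun w => by
    rw [Real.exp_eq_exp_ℝ]; exact NormedSpace.expSeries_div_hasSum_exp w
  have hnorm : ∀ u : ℝ, ‖Complex.exp (-(r * u))‖ = rexp (-Real.cos φ * u) := fun u => by
    rw [Complex.norm_exp, Complex.neg_re, Complex.re_mul_ofReal, hr, re_cexp_neg_mul_I, neg_mul]
  let B : ℕ → ℝ → ℝ := fun k u => rexp (-Real.cos φ * u) * ((|z| * u ^ α) ^ k / k.factorial)
  have hB : ∀ u : ℝ, HasSum (fun k => B k u) (rexp (-Real.cos φ * u + |z| * u ^ α)) := fun u => by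
    rw [Real.exp_add]
    exact (hexpr (|z| * u ^ α)).mul_left _
  have hsum : HasSum (fun k => ∫ u : ℝ in Ioi 0, F k u)
      (∫ u : ℝ in Ioi 0, Complex.exp (-(r * u)) * Complex.exp (z * κ * ((u ^ α : ℝ) : ℂ))) := by
    refine hasSum_integral_of_dominated_convergence B ?_ ?_ ?_ ?_ ?_
    · intro k
      refine Measurable.aestronglyMeasurable ?_
      have : Measurable fun u : ℝ => ((u ^ α : ℝ) : ℂ) :=
        Complex.measurable_ofReal.comp (measurable_id.pow_const α)
      fun_prop
    · intro k
      filter_upwards [ae_restrict_mem measurableSet_Ioi] with u hu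
      have hu' : 0 ≤ u ^ α := Real.rpow_nonneg (le_of_lt hu) _
      simp only [F, B, norm_mul, hnorm, norm_div, norm_pow, hκn, Complex.norm_real,
        Real.norm_eq_abs, abs_of_nonneg hu', mul_one, Complex.norm_natCast]
      exact le_rfl
    · exact Eventually.of_forall fun u => (hB u).summable
    · simp_rw [(hB _).tsum_eq]
      exact integrableOn_exp_neg_mul_add_mul_rpow hα0 hα1 hc _
    · exact Eventually.of_forall fun u => (hexp _).mul_left _
  have hmain := (Complex.hasSum_im (hsum.mul_left r)).mul_left (-(1 / π))
  suffices hterm : ∀ k : ℕ, z ^ k / (k.factorial * Real.Gamma (0 - α * k)) =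
      -(1 / π) * (r * ∫ u : ℝ in Ioi 0, F k u).im by
    simpa only [hterm] using hmain
  intro k
  have hk : 0 < 1 + α * k := by positivity
  have hint : ∫ u : ℝ in Ioi 0, F k u =
      (z ^ k * κ ^ k / k.factorial) * (Complex.exp (φ * (1 + α * k : ℝ) * Complex.I) *
        Real.Gamma (1 + α * k)) := by
    rw [← integral_rpow_mul_cexp_neg_ray (by linarith) hφ1 hk, ← MeasureTheory.integral_const_mul]
    refine setIntegral_congr_fun measurableSet_Ioi fun u hu => ?_
    simp only [F]
    rw [show (1 + α * k - 1 : ℝ) = α * k by ring, Real.rpow_mul (le_of_lt hu), Real.rpow_natCast]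
    push_cast
    ring
  have hphase : r * (κ ^ k * Complex.exp (φ * (1 + α * k : ℝ) * Complex.I)) =
      Complex.exp (((π * (α * k) : ℝ) : ℂ) * Complex.I) := by
    rw [hr, hκ, ← Complex.exp_nat_mul, ← Complex.exp_add, ← Complex.exp_add]
    have hφ' : (φ : ℂ) * (1 + α) = π * α := by exact_mod_cast hφ
    congr 1
    push_cast
    linear_combination (k * Complex.I) * hφ'
  rw [hint, show r * ((z ^ k * κ ^ k / k.factorial) * (Complex.exp (φ * (1 + α * k : ℝ) * Complex.I)
      * Real.Gamma (1 + α * k))) = ((z ^ k / k.factorial * Real.Gamma (1 + α * k) : ℝ) : ℂ) *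
      (r * (κ ^ k * Complex.exp (φ * (1 + α * k : ℝ) * Complex.I))) by push_cast; ring, hphase,
    Complex.im_ofReal_mul, Complex.exp_ofReal_mul_I_im, zero_sub, div_mul_eq_div_mul_one_div,
    one_div_Gamma_neg (by positivity)]
  ring

theorem measurable_wrightW {α : ℝ} (hα0 : 0 < α) (hα1 : α < 1) : Measurable (wrightW α 0) := by
  have hden : 0 < 1 + α := by linarith
  have h := fun z => hasSum_wright (φ := π * α / (1 + α)) hα0 hα1 (by positivity)
    (by rw [div_lt_div_iff₀ hden two_pos]; nlinarith [pi_pos])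
    (by field_simp) z
  refine measurable_of_tendsto_metrizable (f := fun n z => ∑ k ∈ Finset.range n,
    z ^ k / (k.factorial * Real.Gamma (0 - α * k))) (fun n => by fun_prop) ?_
  refine tendsto_pi_nhds.mpr fun z => ?_
  rw [wrightW, (h z).tsum_eq]
  exact (h z).tendsto_sum_nat

/-- The one-sided `α`-stable density `t⁻¹ W(-t^{-α}; -α, 0)`. -/
noncomputable def stableDensity (α t : ℝ) : ℝ := t⁻¹ * wrightW α 0 (-(t ^ (-α)))

theorem measurable_stableDensity {α : ℝ} (hα0 : 0 < α) (hα1 : α < 1) :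
    Measurable (stableDensity α) :=
  measurable_inv.mul ((measurable_wrightW hα0 hα1).comp (measurable_id.pow_const (-α)).neg)

theorem stableDensity_eq {α φ : ℝ} (hα0 : 0 < α) (hα1 : α < 1) (hφ0 : 0 < φ) (hφ1 : φ < π / 2)
    (hφ : φ * (1 + α) = π * α) {t : ℝ} (ht : 0 < t) :
    stableDensity α t = -(1 / π) * (Complex.exp (-φ * Complex.I) * ∫ v : ℝ in Ioi 0,
        Complex.exp (-(Complex.exp (-φ * Complex.I) * (t * v : ℝ))) *
          Complex.exp ((-1 : ℝ) * Complex.exp (φ * Complex.I) * ((v ^ α : ℝ) : ℂ))).im := by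
  rw [stableDensity, wrightW, (hasSum_wright hα0 hα1 hφ0 hφ1 hφ _).tsum_eq]
  have h := integral_comp_mul_left_Ioi (fun u : ℝ =>
        Complex.exp (-(Complex.exp (-φ * Complex.I) * u)) *
          Complex.exp ((-(t ^ (-α)) : ℝ) * Complex.exp (φ * Complex.I) * ((u ^ α : ℝ) : ℂ))) 0 ht
  rw [mul_zero] at h
  have h2 : ∫ v : ℝ in Ioi 0, Complex.exp (-(Complex.exp (-φ * Complex.I) * (t * v : ℝ))) *
          Complex.exp ((-1 : ℝ) * Complex.exp (φ * Complex.I) * ((v ^ α : ℝ) : ℂ)) = _ :=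
    Eq.trans (setIntegral_congr_fun measurableSet_Ioi fun v hv => ?_) h
  · rw [h2, mul_smul_comm, Complex.smul_im, smul_eq_mul]
    ring
  · have hv : (0 : ℝ) < v := hv
    congr 2
    rw [Real.mul_rpow ht.le hv.le, Real.rpow_neg ht.le]
    have : ((t ^ α : ℝ) : ℂ) ≠ 0 := by exact_mod_cast (Real.rpow_pos_of_pos ht α).ne'
    push_cast at this ⊢
    field_simp

theorem abs_stableDensity_le {α φ : ℝ} (hα0 : 0 < α) (hα1 : α < 1) (hφ0 : 0 < φ)
    (hφ1 : φ < π / 2) (hφ : φ * (1 + α) = π * α) {t : ℝ} (ht : 0 < t) :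
    |stableDensity α t| ≤ 1 / π * ∫ v : ℝ in Ioi 0, v ^ (0 : ℝ) * rexp (-Real.cos φ * v ^ α) := by
  have hc : 0 < Real.cos φ := Real.cos_pos_of_mem_Ioo ⟨by linarith, hφ1⟩
  rw [stableDensity_eq hα0 hα1 hφ0 hφ1 hφ ht, abs_mul, abs_neg, abs_of_pos (by positivity)]
  refine mul_le_mul_of_nonneg_left ?_ (by positivity)
  refine (Complex.abs_im_le_norm _).trans ?_
  rw [norm_mul, ← Complex.ofReal_neg, Complex.norm_exp_ofReal_mul_I, one_mul, Complex.ofReal_neg]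
  refine norm_integral_le_of_norm_le
    (integrableOn_rpow_mul_exp_neg_mul_rpow (by norm_num) hα0 hc) ?_
  filter_upwards [ae_restrict_mem measurableSet_Ioi] with v hv
  have hv : (0 : ℝ) < v := hv
  rw [norm_cexp_neg_ray_mul, Real.rpow_zero, one_mul]
  refine Real.exp_le_exp.mpr ?_
  have : 0 < Real.cos φ * (t * v) := by positivity
  linarith

theorem norm_cexp_sub_one_le {w : ℂ} (hw : w.re ≤ 0) : ‖Complex.exp w - 1‖ ≤ 2 * ‖w‖ := by
  by_cases h : ‖w‖ ≤ 1
  · exact Complex.norm_exp_sub_one_le h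
  · refine (norm_sub_le _ _).trans ?_
    rw [Complex.norm_exp, norm_one]
    linarith [Real.exp_le_one_iff.mpr hw]

theorem abs_stableDensity_le_rpow {α φ : ℝ} (hα0 : 0 < α) (hα1 : α < 1) (hφ0 : 0 < φ)
    (hφ1 : φ < π / 2) (hφ : φ * (1 + α) = π * α) {t : ℝ} (ht : 0 < t) :
    |stableDensity α t| ≤
      (1 / π * (2 * ((1 / Real.cos φ) ^ (α + 1) * Real.Gamma (α + 1)))) * t ^ (-(α + 1)) := by
  have hc : 0 < Real.cos φ := Real.cos_pos_of_mem_Ioo ⟨by linarith, hφ1⟩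
  have hct : 0 < Real.cos φ * t := by positivity
  set r := Complex.exp (-φ * Complex.I) with hr
  set κ := Complex.exp (φ * Complex.I) with hκ
  have hrt : 0 < (r * t).re := by rwa [Complex.re_mul_ofReal, hr, re_cexp_neg_mul_I]
  have hmα := measurable_ofReal_rpow α
  have hI0 : IntegrableOn (fun v : ℝ => Complex.exp (-(r * (t * v : ℝ)))) (Ioi 0) := by
    simpa [mul_assoc] using integrableOn_rpow_mul_cexp_neg_mul (a := 0) (by norm_num) hrt
  have hexp0 : r * ∫ v : ℝ in Ioi 0, Complex.exp (-(r * (t * v : ℝ))) = ((1 / t : ℝ) : ℂ) := by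
    have := integral_rpow_mul_cexp_neg_mul one_pos hrt
    simp only [sub_self, Real.rpow_zero, Complex.ofReal_one, one_mul, Complex.cpow_one,
      Real.Gamma_one, mul_one, mul_assoc, ← Complex.ofReal_mul] at this
    rw [this]
    push_cast
    have : r ≠ 0 := Complex.exp_ne_zero _
    have : (t : ℂ) ≠ 0 := by exact_mod_cast ht.ne'
    field_simp
  have hbd : ∀ v : ℝ, 0 < v → ‖Complex.exp (-(r * (t * v : ℝ))) *
      (Complex.exp ((-1 : ℝ) * κ * ((v ^ α : ℝ) : ℂ)) - 1)‖ ≤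
      2 * (v ^ (α + 1 - 1) * rexp (-(Real.cos φ * t * v))) := fun v hv => by
    have hvα : 0 ≤ v ^ α := Real.rpow_nonneg hv.le _
    have h1 : ‖Complex.exp (-(r * (t * v : ℝ)))‖ = rexp (-(Real.cos φ * t * v)) := by
      rw [Complex.norm_exp, Complex.neg_re, Complex.re_mul_ofReal, hr, re_cexp_neg_mul_I]
      ring_nf
    have h2 : ‖Complex.exp ((-1 : ℝ) * κ * ((v ^ α : ℝ) : ℂ)) - 1‖ ≤ 2 * v ^ α := by
      refine (norm_cexp_sub_one_le ?_).trans_eq ?_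
      · rw [Complex.re_mul_ofReal, Complex.re_ofReal_mul, hκ, re_cexp_mul_I]
        nlinarith
      · rw [norm_mul, norm_mul, hκ, Complex.norm_exp_ofReal_mul_I, Complex.norm_real,
          Complex.norm_real, Real.norm_of_nonneg hvα]
        simp
    rw [norm_mul, h1, add_sub_cancel_right, mul_comm, ← mul_assoc]
    gcongr
  have hIb : IntegrableOn (fun v : ℝ => 2 * (v ^ (α + 1 - 1) * rexp (-(Real.cos φ * t * v))))
      (Ioi 0) := (integrableOn_rpow_mul_exp_neg_mul (by linarith) hct).const_mul 2
  have hI1 : IntegrableOn (fun v : ℝ => Complex.exp (-(r * (t * v : ℝ))) *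
      (Complex.exp ((-1 : ℝ) * κ * ((v ^ α : ℝ) : ℂ)) - 1)) (Ioi 0) := by
    refine hIb.mono' (Measurable.aestronglyMeasurable (by fun_prop)) ?_
    filter_upwards [ae_restrict_mem measurableSet_Ioi] with v hv using hbd v hv
  have hsplit : ∫ v : ℝ in Ioi 0, Complex.exp (-(r * (t * v : ℝ))) *
        Complex.exp ((-1 : ℝ) * κ * ((v ^ α : ℝ) : ℂ)) =
      (∫ v : ℝ in Ioi 0, Complex.exp (-(r * (t * v : ℝ)))) +
      ∫ v : ℝ in Ioi 0, Complex.exp (-(r * (t * v : ℝ))) *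
        (Complex.exp ((-1 : ℝ) * κ * ((v ^ α : ℝ) : ℂ)) - 1) := by
    rw [← MeasureTheory.integral_add hI0 hI1]
    congr 1 with v
    ring
  rw [stableDensity_eq hα0 hα1 hφ0 hφ1 hφ ht, hsplit, mul_add, hexp0, Complex.add_im,
    Complex.ofReal_im, zero_add, abs_mul, abs_neg, abs_of_pos (by positivity), mul_assoc]
  refine mul_le_mul_of_nonneg_left ?_ (by positivity)
  refine (Complex.abs_im_le_norm _).trans ?_
  rw [norm_mul, hr, ← Complex.ofReal_neg, Complex.norm_exp_ofReal_mul_I, one_mul,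
    Complex.ofReal_neg, ← hr]
  refine (MeasureTheory.norm_integral_le_of_norm_le hIb ?_).trans_eq ?_
  · filter_upwards [ae_restrict_mem measurableSet_Ioi] with v hv using hbd v hv
  · rw [MeasureTheory.integral_const_mul, Real.integral_rpow_mul_exp_neg_mul_Ioi (by linarith) hct,
      one_div, mul_inv, Real.mul_rpow (by positivity) (by positivity), Real.inv_rpow ht.le,
      ← Real.rpow_neg ht.le, one_div]
    ring

theorem exists_ray_angle {α : ℝ} (hα0 : 0 < α) (hα1 : α < 1) :
    ∃ φ : ℝ, 0 < φ ∧ φ < π / 2 ∧ φ * (1 + α) = π * α := by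
  have hden : 0 < 1 + α := by linarith
  refine ⟨π * α / (1 + α), by positivity, ?_, by field_simp⟩
  rw [div_lt_div_iff₀ hden two_pos]
  nlinarith [pi_pos]

theorem exists_abs_stableDensity_le {α : ℝ} (hα0 : 0 < α) (hα1 : α < 1) :
    ∃ K, ∀ t, 0 < t → |stableDensity α t| ≤ K := by
  obtain ⟨φ, h0, h1, h2⟩ := exists_ray_angle hα0 hα1
  exact ⟨_, fun t ht => abs_stableDensity_le hα0 hα1 h0 h1 h2 ht⟩

theorem integrableOn_rpow_mul_stableDensity {α σ : ℝ} (hα0 : 0 < α) (hα1 : α < 1) (hσ0 : 0 ≤ σ)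
    (hσ1 : σ < 1) : IntegrableOn (fun t => t ^ (-σ) * stableDensity α t) (Ioi 0) := by
  obtain ⟨φ, h0, h1, h2⟩ := exists_ray_angle hα0 hα1
  have hm : AEStronglyMeasurable (fun t => t ^ (-σ) * stableDensity α t) volume :=
    ((measurable_id.pow_const (-σ)).mul (measurable_stableDensity hα0 hα1)).aestronglyMeasurable
  rw [← Ioc_union_Ioi_eq_Ioi zero_le_one]
  refine IntegrableOn.union ?_ ?_
  · obtain ⟨K, hK⟩ := exists_abs_stableDensity_le hα0 hα1
    have hI : IntegrableOn (fun t : ℝ => t ^ (-σ) * K) (Ioc 0 1) :=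
      ((intervalIntegrable_iff_integrableOn_Ioc_of_le zero_le_one).mp
        (intervalIntegral.intervalIntegrable_rpow' (by linarith))).mul_const K
    refine hI.mono' hm.restrict ?_
    filter_upwards [ae_restrict_mem measurableSet_Ioc] with t ht
    have := Real.rpow_nonneg ht.1.le (-σ)
    rw [norm_mul, Real.norm_of_nonneg this, Real.norm_eq_abs]
    gcongr
    exact hK t ht.1
  · have hI := (integrableOn_Ioi_rpow_of_lt (a := -(α + 1)) (by linarith) one_pos).const_mul
      (1 / π * (2 * ((1 / Real.cos φ) ^ (α + 1) * Real.Gamma (α + 1))))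
    refine hI.mono' hm.restrict ?_
    filter_upwards [ae_restrict_mem measurableSet_Ioi] with t ht
    have ht1 : (1 : ℝ) < t := ht
    have ht0 : (0 : ℝ) < t := one_pos.trans ht1
    have h3 : t ^ (-σ) ≤ 1 := Real.rpow_le_one_of_one_le_of_nonpos ht1.le (by linarith)
    rw [norm_mul, Real.norm_of_nonneg (Real.rpow_nonneg ht0.le _), Real.norm_eq_abs]
    exact (mul_le_of_le_one_left (abs_nonneg _) h3).trans
      (abs_stableDensity_le_rpow hα0 hα1 h0 h1 h2 ht0)

theorem integrable_stable_kernel {α φ σ : ℝ} (hα0 : 0 < α) (hφ0 : 0 < φ) (hφ1 : φ < π / 2)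
    (hσ0 : 0 < σ) (hσ1 : σ < 1) :
    Integrable (Function.uncurry fun t v : ℝ => ((t ^ (-σ) : ℝ) : ℂ) *
      (Complex.exp (-(Complex.exp (-φ * Complex.I) * (t * v : ℝ))) *
        Complex.exp ((-1 : ℝ) * Complex.exp (φ * Complex.I) * ((v ^ α : ℝ) : ℂ))))
      ((volume.restrict (Ioi 0)).prod (volume.restrict (Ioi 0))) := by
  have hc : 0 < Real.cos φ := Real.cos_pos_of_mem_Ioo ⟨by linarith, hφ1⟩
  have hm1 := measurable_ofReal_rpow α
  have hm2 := measurable_ofReal_rpow (-σ)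
  have hmeas : Measurable (Function.uncurry fun t v : ℝ => ((t ^ (-σ) : ℝ) : ℂ) *
      (Complex.exp (-(Complex.exp (-φ * Complex.I) * (t * v : ℝ))) *
        Complex.exp ((-1 : ℝ) * Complex.exp (φ * Complex.I) * ((v ^ α : ℝ) : ℂ)))) := by
    have h1 := hm1.comp (measurable_snd : Measurable (Prod.snd : ℝ × ℝ → ℝ))
    have h2 := hm2.comp (measurable_fst : Measurable (Prod.fst : ℝ × ℝ → ℝ))
    simp only [Function.comp_def] at h1 h2
    unfold Function.uncurry
    fun_prop
  have hnorm : ∀ t v : ℝ, 0 < t → ‖((t ^ (-σ) : ℝ) : ℂ) *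
      (Complex.exp (-(Complex.exp (-φ * Complex.I) * (t * v : ℝ))) *
        Complex.exp ((-1 : ℝ) * Complex.exp (φ * Complex.I) * ((v ^ α : ℝ) : ℂ)))‖ =
      t ^ (1 - σ - 1) * rexp (-(Real.cos φ * v * t)) * rexp (-Real.cos φ * v ^ α) :=
    fun t v ht => by
      rw [norm_mul, norm_cexp_neg_ray_mul, Complex.norm_real,
        Real.norm_of_nonneg (Real.rpow_nonneg ht.le _), mul_assoc (t ^ (1 - σ - 1)),
        ← Real.exp_add]
      ring_nf
  refine (integrable_prod_iff' hmeas.aestronglyMeasurable).mpr ⟨?_, ?_⟩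
  · filter_upwards [ae_restrict_mem measurableSet_Ioi] with v hv
    have hv : (0 : ℝ) < v := hv
    refine ((integrableOn_rpow_mul_exp_neg_mul (a := 1 - σ - 1) (b := Real.cos φ * v)
      (by linarith) (by positivity)).mul_const (rexp (-Real.cos φ * v ^ α))).mono'
        (hmeas.comp (measurable_id.prodMk measurable_const)).aestronglyMeasurable ?_
    filter_upwards [ae_restrict_mem measurableSet_Ioi] with t ht
    exact (hnorm t v ht).le
  · have hI := (integrableOn_rpow_mul_exp_neg_mul_rpow (s := σ - 1) (by linarith) hα0 hc).const_mul
      ((1 / Real.cos φ) ^ (1 - σ) * Real.Gamma (1 - σ))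
    refine (IntegrableOn.congr_fun hI (fun v hv => ?_) measurableSet_Ioi)
    have hv : (0 : ℝ) < v := hv
    have hcv : 0 < Real.cos φ * v := by positivity
    have h3 : ∫ t : ℝ in Ioi 0, ‖((t ^ (-σ) : ℝ) : ℂ) *
      (Complex.exp (-(Complex.exp (-φ * Complex.I) * (t * v : ℝ))) *
        Complex.exp ((-1 : ℝ) * Complex.exp (φ * Complex.I) * ((v ^ α : ℝ) : ℂ)))‖ =
        (1 / (Real.cos φ * v)) ^ (1 - σ) * Real.Gamma (1 - σ) * rexp (-Real.cos φ * v ^ α) := by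
      rw [← Real.integral_rpow_mul_exp_neg_mul_Ioi (by linarith) hcv,
        ← MeasureTheory.integral_mul_const]
      exact setIntegral_congr_fun measurableSet_Ioi fun t ht => hnorm t v ht
    refine Eq.trans ?_ h3.symm
    rw [one_div, one_div, mul_inv, Real.mul_rpow (by positivity) (by positivity),
      Real.inv_rpow hv.le, ← Real.rpow_neg hv.le, neg_sub]
    ring

/-- The negative moments of the one-sided stable density. -/
theorem integral_rpow_mul_stableDensity {α σ : ℝ} (hα0 : 0 < α) (hα1 : α < 1) (hσ0 : 0 < σ)
    (hσ1 : σ < 1) :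
    ∫ t in Ioi 0, t ^ (-σ) * stableDensity α t =
      Real.Gamma (1 + σ / α) / Real.Gamma (1 + σ) := by
  obtain ⟨φ, hφ0, hφ1, hφ⟩ := exists_ray_angle hα0 hα1
  have hG := integrable_stable_kernel hα0 hφ0 hφ1 hσ0 hσ1
  set r := Complex.exp (-φ * Complex.I) with hr
  set κ := Complex.exp (φ * Complex.I) with hκ
  have hrre : 0 < r.re := by
    rw [hr, re_cexp_neg_mul_I]; exact Real.cos_pos_of_mem_Ioo ⟨by linarith, hφ1⟩
  have hκre : 0 < κ.re := by
    rw [hκ, re_cexp_mul_I]; exact Real.cos_pos_of_mem_Ioo ⟨by linarith, hφ1⟩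
  have hrinv : 1 / r = κ := by rw [hr, hκ, one_div, ← Complex.exp_neg, neg_mul, neg_neg]
  have hstep1 : ∫ t in Ioi 0, t ^ (-σ) * stableDensity α t =
      -(1 / π) * (r * ∫ t : ℝ in Ioi 0, ∫ v : ℝ in Ioi 0, ((t ^ (-σ) : ℝ) : ℂ) *
        (Complex.exp (-(r * (t * v : ℝ))) *
          Complex.exp ((-1 : ℝ) * κ * ((v ^ α : ℝ) : ℂ)))).im := by
    have hI := Complex.imCLM.integral_comp_comm (hG.integral_prod_left.const_mul r)
    simp only [Function.uncurry] at hI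
    rw [← MeasureTheory.integral_const_mul, ← Complex.imCLM_apply, ← hI,
      ← MeasureTheory.integral_const_mul]
    refine setIntegral_congr_fun measurableSet_Ioi fun t ht => ?_
    simp only [Complex.imCLM_apply]
    rw [stableDensity_eq hα0 hα1 hφ0 hφ1 hφ ht, MeasureTheory.integral_const_mul, mul_left_comm r,
      Complex.im_ofReal_mul]
    ring
  have hinner : ∀ v : ℝ, 0 < v → ∫ t : ℝ in Ioi 0, ((t ^ (-σ) : ℝ) : ℂ) *
        (Complex.exp (-(r * (t * v : ℝ))) * Complex.exp ((-1 : ℝ) * κ * ((v ^ α : ℝ) : ℂ))) =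
      (κ ^ ((1 - σ : ℝ) : ℂ) * Real.Gamma (1 - σ)) *
        (((v ^ (σ - 1) : ℝ) : ℂ) * Complex.exp (-(κ * ((v ^ α : ℝ) : ℂ)))) := fun v hv => by
    have h := integral_rpow_mul_cexp_neg_mul (a := 1 - σ) (by linarith)
      (r := r * v) (by rw [Complex.re_mul_ofReal]; positivity)
    have h2 : (1 / (r * v)) ^ ((1 - σ : ℝ) : ℂ) =
        κ ^ ((1 - σ : ℝ) : ℂ) * ((v ^ (σ - 1) : ℝ) : ℂ) := by
      have hκ0 : κ ≠ 0 := Complex.exp_ne_zero _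
      have hvi : 0 < v⁻¹ := inv_pos.mpr hv
      have hvi0 : ((v⁻¹ : ℝ) : ℂ) ≠ 0 := by exact_mod_cast hvi.ne'
      rw [← div_div, hrinv, div_eq_mul_inv, ← Complex.ofReal_inv, mul_comm κ, ← neg_sub 1 σ,
        Real.rpow_neg hv.le, ← Real.inv_rpow hv.le, Complex.ofReal_cpow hvi.le,
        Complex.cpow_def_of_ne_zero (mul_ne_zero hvi0 hκ0), Complex.log_ofReal_mul hvi hκ0,
        add_mul, Complex.exp_add, Complex.cpow_def_of_ne_zero hvi0,
        Complex.cpow_def_of_ne_zero hκ0, Complex.ofReal_log hvi.le, mul_comm]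
    rw [h2] at h
    calc _ = ∫ t : ℝ in Ioi 0, (((t ^ (1 - σ - 1) : ℝ) : ℂ) * Complex.exp (-(r * v * t))) *
          Complex.exp (-(κ * ((v ^ α : ℝ) : ℂ))) := by
            congr 1 with t
            push_cast
            ring_nf
      _ = _ := by rw [MeasureTheory.integral_mul_const, h]; ring
  have houter : ∫ v : ℝ in Ioi 0, ((v ^ (σ - 1) : ℝ) : ℂ) *
      Complex.exp (-(κ * ((v ^ α : ℝ) : ℂ))) =
      (1 / α : ℝ) * (r ^ ((σ / α : ℝ) : ℂ) * Real.Gamma (σ / α)) := by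
    have hκinv : 1 / κ = r := by rw [← hrinv, one_div_one_div]
    rw [← hκinv, ← integral_rpow_mul_cexp_neg_mul (by positivity) hκre,
      ← integral_comp_rpow_Ioi_of_pos
        (g := fun w : ℝ => ((w ^ (σ / α - 1) : ℝ) : ℂ) * Complex.exp (-(κ * w))) hα0, ← MeasureTheory.integral_const_mul]
    refine setIntegral_congr_fun measurableSet_Ioi fun v hv => ?_
    have hv : (0 : ℝ) < v := hv
    have h5 : v ^ (σ - 1) = 1 / α * (α * v ^ (α - 1) * (v ^ α) ^ (σ / α - 1)) := by
      rw [← Real.rpow_mul hv.le, mul_assoc, ← Real.rpow_add hv]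
      field_simp
      ring_nf
    simp only [Complex.real_smul]
    rw [h5]
    push_cast
    ring
  have hswap := integral_integral_swap hG
  rw [hstep1, hswap, setIntegral_congr_fun measurableSet_Ioi hinner,
    MeasureTheory.integral_const_mul, houter]
  have hphase : r * (κ ^ ((1 - σ : ℝ) : ℂ) * r ^ ((σ / α : ℝ) : ℂ)) =
      Complex.exp ((-(π * σ) : ℝ) * Complex.I) := by
    have h6 : r ^ ((σ / α : ℝ) : ℂ) = Complex.exp ((-φ : ℝ) * ((σ / α : ℝ) : ℂ) * Complex.I) := by
      rw [← cexp_mul_I_cpow (by linarith) (by linarith), hr, Complex.ofReal_neg]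
    rw [h6, hκ, cexp_mul_I_cpow (by linarith) (by linarith), hr, ← Complex.exp_add,
      ← Complex.exp_add]
    have h7 : φ * (σ + σ / α) = π * σ := by
      field_simp
      linear_combination hφ
    have h7' : (φ : ℂ) * (σ + σ / α) = π * σ := by exact_mod_cast h7
    congr 1
    push_cast
    linear_combination (-Complex.I) * h7'
  rw [show r * (κ ^ ((1 - σ : ℝ) : ℂ) * Real.Gamma (1 - σ) * ((1 / α : ℝ) *
      (r ^ ((σ / α : ℝ) : ℂ) * Real.Gamma (σ / α)))) =
      ((Real.Gamma (1 - σ) * (1 / α) * Real.Gamma (σ / α) : ℝ) : ℂ) *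
        (r * (κ ^ ((1 - σ : ℝ) : ℂ) * r ^ ((σ / α : ℝ) : ℂ))) by push_cast; ring, hphase,
    Complex.im_ofReal_mul, Complex.exp_ofReal_mul_I_im, Real.sin_neg]
  have hΓ := Real.Gamma_mul_Gamma_one_sub σ
  have hsin : 0 < Real.sin (π * σ) :=
    Real.sin_pos_of_pos_of_lt_pi (by positivity) (by nlinarith [pi_pos])
  have hσα : σ / α ≠ 0 := by positivity
  have hpos : 0 < Real.Gamma σ := Real.Gamma_pos_of_pos hσ0
  rw [add_comm 1, add_comm 1, Real.Gamma_add_one hσα, Real.Gamma_add_one hσ0.ne']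
  rw [eq_div_iff hsin.ne'] at hΓ
  field_simp
  linear_combination hΓ

theorem integrableOn_stableDensity {α : ℝ} (hα0 : 0 < α) (hα1 : α < 1) :
    IntegrableOn (stableDensity α) (Ioi 0) := by
  simpa using integrableOn_rpow_mul_stableDensity hα0 hα1 le_rfl one_pos

theorem integral_stableDensity {α : ℝ} (hα0 : 0 < α) (hα1 : α < 1) :
    ∫ t in Ioi 0, stableDensity α t = 1 := by
  have h1 : Tendsto (fun σ : ℝ => ∫ t in Ioi 0, t ^ (-σ) * stableDensity α t) (𝓝[>] 0)
      (𝓝 (∫ t in Ioi 0, stableDensity α t)) := by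
    refine tendsto_integral_filter_of_dominated_convergence
      (fun t => |stableDensity α t| + |t ^ (-(1 / 2) : ℝ) * stableDensity α t|) ?_ ?_ ?_ ?_
    · exact Eventually.of_forall fun σ =>
        ((measurable_id.pow_const (-σ)).mul (measurable_stableDensity hα0 hα1)).aestronglyMeasurable
    · have hmem : Ioo (0 : ℝ) (1 / 2) ∈ 𝓝[>] (0 : ℝ) := Ioo_mem_nhdsGT (by norm_num)
      filter_upwards [hmem] with σ hσ
      filter_upwards [ae_restrict_mem measurableSet_Ioi] with t ht
      have ht : (0 : ℝ) < t := ht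
      have hp := Real.rpow_pos_of_pos ht (-(1 / 2) : ℝ)
      rw [norm_mul, Real.norm_of_nonneg (Real.rpow_nonneg ht.le _), Real.norm_eq_abs, abs_mul,
        abs_of_pos hp, ← one_add_mul]
      gcongr
      rcases le_total 1 t with h | h
      · linarith [Real.rpow_le_one_of_one_le_of_nonpos h (by linarith [hσ.1] : -σ ≤ 0)]
      · linarith [Real.rpow_le_rpow_of_exponent_ge ht h (by linarith [hσ.2] : -(1 / 2) ≤ -σ)]
    · exact (integrableOn_stableDensity hα0 hα1).abs.add
        (integrableOn_rpow_mul_stableDensity hα0 hα1 (by norm_num) (by norm_num)).abs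
    · filter_upwards [ae_restrict_mem measurableSet_Ioi] with t ht
      have ht : (0 : ℝ) < t := ht
      have hcont : Continuous fun σ : ℝ => t ^ (-σ) * stableDensity α t :=
        (Continuous.rpow continuous_const continuous_neg fun _ => Or.inl ht.ne').mul
          continuous_const
      have := (hcont.tendsto 0).mono_left (nhdsWithin_le_nhds (s := Ioi 0))
      simpa using this
  have h2 : Tendsto (fun σ : ℝ => Real.Gamma (1 + σ / α) / Real.Gamma (1 + σ)) (𝓝[>] 0)
      (𝓝 1) := by
    have hΓ : ContinuousAt Real.Gamma 1 :=
      (Real.differentiableAt_Gamma fun m h => by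
        have : (0 : ℝ) ≤ m := m.cast_nonneg
        linarith).continuousAt
    have hc : ContinuousAt (fun σ : ℝ => Real.Gamma (1 + σ / α) / Real.Gamma (1 + σ)) 0 := by
      refine ContinuousAt.div ?_ ?_ (by simp)
      · exact ContinuousAt.comp (g := Real.Gamma) (by simpa using hΓ) (by fun_prop)
      · exact ContinuousAt.comp (g := Real.Gamma) (by simpa using hΓ) (by fun_prop)
    have := hc.tendsto.mono_left (nhdsWithin_le_nhds (s := Ioi 0))
    simpa using this
  refine tendsto_nhds_unique h1 (h2.congr' ?_)
  filter_upwards [Ioo_mem_nhdsGT (zero_lt_one' ℝ)] with σ hσ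
  exact (integral_rpow_mul_stableDensity hα0 hα1 hσ.1 hσ.2).symm

theorem laplaceConv_of_pos (f g : ℝ → ℝ) {t : ℝ} (ht : 0 < t) :
    laplaceConv f g t = ∫ τ in Ioo 0 t, f τ * g (t - τ) := by
  rw [laplaceConv, intervalIntegral.integral_of_le ht.le, integral_Ioc_eq_integral_Ioo]

theorem integrableOn_mul_comp_sub {f g : ℝ → ℝ} {B : ℝ} (t : ℝ) (hf : IntegrableOn f (Ioi 0))
    (hg : Measurable g) (hB : ∀ s, 0 < s → |g s| ≤ B) :
    IntegrableOn (fun τ => f τ * g (t - τ)) (Ioo 0 t) := by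
  have hf' := hf.mono_set (t := Ioi 0) (s := Ioo 0 t) fun _ h => h.1
  refine (hf'.abs.mul_const B).mono' (hf'.aestronglyMeasurable.mul
    (hg.comp (measurable_const.sub measurable_id)).aestronglyMeasurable) ?_
  filter_upwards [ae_restrict_mem measurableSet_Ioo] with τ hτ
  rw [norm_mul, Real.norm_eq_abs, Real.norm_eq_abs]
  gcongr
  exact hB _ (sub_pos.mpr hτ.2)

theorem abs_laplaceConv_le {f g : ℝ → ℝ} {B t : ℝ} (ht : 0 < t) (hf : IntegrableOn f (Ioi 0))
    (hB : ∀ s, 0 < s → |g s| ≤ B) :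
    |laplaceConv f g t| ≤ B * ∫ τ in Ioi 0, |f τ| := by
  have hB0 : 0 ≤ B := (abs_nonneg _).trans (hB 1 one_pos)
  have hf' := hf.mono_set (t := Ioi 0) (s := Ioo 0 t) fun _ h => h.1
  calc |laplaceConv f g t| ≤ ∫ τ in Ioo 0 t, B * |f τ| := by
        rw [laplaceConv_of_pos _ _ ht, ← Real.norm_eq_abs]
        refine MeasureTheory.norm_integral_le_of_norm_le (hf'.abs.const_mul B) ?_
        filter_upwards [ae_restrict_mem measurableSet_Ioo] with τ hτ
        rw [norm_mul, Real.norm_eq_abs, Real.norm_eq_abs, mul_comm]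
        gcongr
        exact hB _ (sub_pos.mpr hτ.2)
    _ ≤ _ := by
        rw [MeasureTheory.integral_const_mul]
        gcongr
        · exact Eventually.of_forall fun τ => abs_nonneg _
        · exact hf.abs
        · exact Ioo_subset_Ioi_self

theorem integrableOn_laplaceConv {f g : ℝ → ℝ} (hf : IntegrableOn f (Ioi 0))
    (hg : IntegrableOn g (Ioi 0)) : IntegrableOn (laplaceConv f g) (Ioi 0) := by
  have h := integrable_posConvolution hf hg (ContinuousLinearMap.mul ℝ ℝ)
  rw [posConvolution, integrable_indicator_iff measurableSet_Ioi] at h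
  exact h

theorem integral_laplaceConv {f g : ℝ → ℝ} (hf : IntegrableOn f (Ioi 0))
    (hg : IntegrableOn g (Ioi 0)) : ∫ t in Ioi 0, laplaceConv f g t =
      (∫ t in Ioi 0, f t) * ∫ t in Ioi 0, g t :=
  integral_posConvolution hf hg (ContinuousLinearMap.mul ℝ ℝ)

theorem integrableOn_min_mul_abs {f : ℝ → ℝ} (hf : IntegrableOn f (Ioi 0)) :
    IntegrableOn (fun s => min s 1 * |f s|) (Ioi 0) := by
  refine hf.abs.mono'
    ((measurable_id.min measurable_const).aestronglyMeasurable.mul hf.abs.aestronglyMeasurable) ?_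
  filter_upwards [ae_restrict_mem measurableSet_Ioi] with s hs
  rw [norm_mul, Real.norm_eq_abs, Real.norm_eq_abs, abs_abs,
    abs_of_nonneg (le_min (le_of_lt hs) zero_le_one)]
  exact mul_le_of_le_one_left (abs_nonneg _) (min_le_right _ _)

theorem min_mul_abs_laplaceConv_le {f g : ℝ → ℝ} {B t : ℝ} (ht : 0 < t)
    (hf : IntegrableOn f (Ioi 0)) (hg : Measurable g) (hB : ∀ s, 0 < s → |g s| ≤ B) :
    min t 1 * |laplaceConv f g t| ≤ laplaceConv (fun s => min s 1 * |f s|) (fun s => |g s|) t +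
      laplaceConv (fun s => |f s|) (fun s => min s 1 * |g s|) t := by
  have hmin : ∀ s : ℝ, 0 < s → |min s 1| ≤ 1 := fun s hs => by
    rw [abs_of_nonneg (le_min hs.le zero_le_one)]; exact min_le_right _ _
  have hwf := integrableOn_min_mul_abs hf
  have h1 := integrableOn_mul_comp_sub t hwf (g := fun s => |g s|) (by fun_prop)
    (fun s hs => by rw [abs_abs]; exact hB s hs)
  have h2 := integrableOn_mul_comp_sub t hf.abs (g := fun s => min s 1 * |g s|) (by fun_prop)
    (fun s hs => by
      rw [abs_mul, abs_abs]
      exact (mul_le_of_le_one_left (abs_nonneg _) (hmin s hs)).trans (hB s hs))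
  have h0 := integrableOn_mul_comp_sub t hf hg hB
  rw [laplaceConv_of_pos _ _ ht, laplaceConv_of_pos _ _ ht, laplaceConv_of_pos _ _ ht,
    ← MeasureTheory.integral_add h1 h2]
  calc _ ≤ min t 1 * ∫ τ in Ioo 0 t, |f τ * g (t - τ)| := by
        refine mul_le_mul_of_nonneg_left abs_integral_le_integral_abs
          (le_min ht.le zero_le_one)
    _ = ∫ τ in Ioo 0 t, min t 1 * |f τ * g (t - τ)| := (MeasureTheory.integral_const_mul _ _).symm
    _ ≤ _ := by
        refine setIntegral_mono_on (h0.abs.const_mul _) (h1.add h2) measurableSet_Ioo ?_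
        intro τ hτ
        have h3 : min t 1 ≤ min τ 1 + min (t - τ) 1 := by
          have := hτ.1; have := hτ.2
          rcases le_total τ 1 with h | h <;> rcases le_total (t - τ) 1 with h' | h' <;>
            simp only [h, h', min_eq_left, min_eq_right] <;>
            first | linarith [min_le_left t 1] | linarith [min_le_right t 1]
        have h4 : 0 ≤ |f τ| * |g (t - τ)| := by positivity
        rw [abs_mul]
        nlinarith

theorem measurable_uncurry_laplaceConv {f g : ℝ → ℝ → ℝ} (hf : Measurable (Function.uncurry f))
    (hg : Measurable (Function.uncurry g)) :
    Measurable (Function.uncurry fun p => laplaceConv (f p) (g p)) := by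
  have hF : Measurable fun z : (ℝ × ℝ) × ℝ => f z.1.1 z.2 * g z.1.1 (z.1.2 - z.2) :=
    (hf.comp (f := fun z : (ℝ × ℝ) × ℝ => (z.1.1, z.2)) (by fun_prop)).mul
      (hg.comp (f := fun z : (ℝ × ℝ) × ℝ => (z.1.1, z.1.2 - z.2)) (by fun_prop))
  have hs1 : MeasurableSet {z : (ℝ × ℝ) × ℝ | z.2 ∈ Ioc 0 z.1.2} :=
    (measurableSet_lt measurable_const measurable_snd).inter
      (measurableSet_le measurable_snd (measurable_snd.comp measurable_fst))
  have hs2 : MeasurableSet {z : (ℝ × ℝ) × ℝ | z.2 ∈ Ioc z.1.2 0} :=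
    (measurableSet_lt (measurable_snd.comp measurable_fst) measurable_snd).inter
      (measurableSet_le measurable_snd measurable_const)
  have h1 := (hF.indicator hs1).stronglyMeasurable.integral_prod_right' (ν := volume)
  have h2 := (hF.indicator hs2).stronglyMeasurable.integral_prod_right' (ν := volume)
  refine Eq.mp (congrArg Measurable ?_) (h1.sub h2).measurable
  ext ⟨p, t⟩
  simp only [Function.uncurry, laplaceConv, intervalIntegral, Pi.sub_apply]
  rw [← MeasureTheory.integral_indicator measurableSet_Ioc,
    ← MeasureTheory.integral_indicator measurableSet_Ioc]
  rfl

/-- Families of kernels on the half-line that concentrate at the origin as the parameter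
tends to zero, with unit mass, bounded `L¹` norm and a power-like bound of the supremum. -/
structure IsConcentratingFamily (f : ℝ → ℝ → ℝ) : Prop where
  measurable : Measurable (Function.uncurry f)
  bound : ∃ C β : ℝ, 1 / 2 < β ∧ ∀ p t, 0 < p → 0 < t → |f p t| ≤ C * p ^ (-β)
  integrableOn : ∀ p, 0 < p → IntegrableOn (f p) (Ioi 0)
  norm_le : ∃ C, ∀ p, 0 < p → ∫ t in Ioi 0, |f p t| ≤ C
  integral_eq_one : ∀ p, 0 < p → ∫ t in Ioi 0, f p t = 1
  tendsto : Tendsto (fun p => ∫ t in Ioi 0, min t 1 * |f p t|) (𝓝[>] 0) (𝓝 0)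

theorem integral_min_mul_abs_nonneg (f : ℝ → ℝ) : 0 ≤ ∫ t in Ioi 0, min t 1 * |f t| :=
  setIntegral_nonneg measurableSet_Ioi fun _ ht =>
    mul_nonneg (le_min (le_of_lt ht) zero_le_one) (abs_nonneg _)

theorem IsConcentratingFamily.laplaceConv {f g : ℝ → ℝ → ℝ} (hf : IsConcentratingFamily f)
    (hg : IsConcentratingFamily g) :
    IsConcentratingFamily fun p => laplaceConv (f p) (g p) := by
  obtain ⟨Cf, hCf⟩ := hf.norm_le
  obtain ⟨Cg, hCg⟩ := hg.norm_le
  obtain ⟨B, β, hβ, hB⟩ := hg.bound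
  have hgm : ∀ p, Measurable (g p) := fun p => hg.measurable.comp measurable_prodMk_left
  have hdom : ∀ p, 0 < p → IntegrableOn
      (_root_.laplaceConv (fun s => |f p s|) (fun s => |g p s|)) (Ioi 0) :=
    fun p hp => integrableOn_laplaceConv (hf.integrableOn p hp).abs (hg.integrableOn p hp).abs
  refine ⟨measurable_uncurry_laplaceConv hf.measurable hg.measurable, ⟨B * Cf, β, hβ, ?_⟩,
    fun p hp => integrableOn_laplaceConv (hf.integrableOn p hp) (hg.integrableOn p hp),
    ⟨Cf * Cg, ?_⟩, ?_, ?_⟩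
  · intro p t hp ht
    have hB0 : 0 ≤ B * p ^ (-β) := (abs_nonneg _).trans (hB p t hp ht)
    calc _ ≤ B * p ^ (-β) * ∫ τ in Ioi 0, |f p τ| :=
          abs_laplaceConv_le ht (hf.integrableOn p hp) fun s hs => hB p s hp hs
      _ ≤ B * p ^ (-β) * Cf := by gcongr; exact hCf p hp
      _ = _ := by ring
  · intro p hp
    calc _ ≤ ∫ t in Ioi 0, _root_.laplaceConv (fun s => |f p s|) (fun s => |g p s|) t := by
          refine setIntegral_mono_on
            (integrableOn_laplaceConv (hf.integrableOn p hp) (hg.integrableOn p hp)).abs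
            (hdom p hp) measurableSet_Ioi fun t ht => ?_
          rw [laplaceConv_of_pos _ _ ht, laplaceConv_of_pos _ _ ht]
          refine abs_integral_le_integral_abs.trans_eq ?_
          simp only [abs_mul]
      _ = (∫ t in Ioi 0, |f p t|) * ∫ t in Ioi 0, |g p t| :=
          integral_laplaceConv (hf.integrableOn p hp).abs (hg.integrableOn p hp).abs
      _ ≤ Cf * Cg := by
          have h1 : 0 ≤ ∫ t in Ioi 0, |f p t| := integral_nonneg fun _ => abs_nonneg _
          have h2 : 0 ≤ ∫ t in Ioi 0, |g p t| := integral_nonneg fun _ => abs_nonneg _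
          exact mul_le_mul (hCf p hp) (hCg p hp) h2 (h1.trans (hCf p hp))
  · intro p hp
    rw [integral_laplaceConv (hf.integrableOn p hp) (hg.integrableOn p hp),
      hf.integral_eq_one p hp, hg.integral_eq_one p hp, one_mul]
  · have hlim : Tendsto (fun p => (∫ t in Ioi 0, min t 1 * |f p t|) * Cg +
        Cf * ∫ t in Ioi 0, min t 1 * |g p t|) (𝓝[>] 0) (𝓝 0) := by
      simpa using (hf.tendsto.mul_const Cg).add (hg.tendsto.const_mul Cf)
    refine squeeze_zero' (Eventually.of_forall fun p => integral_min_mul_abs_nonneg _) ?_ hlim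
    filter_upwards [self_mem_nhdsWithin] with p hp
    have hp : 0 < p := hp
    have hif := hf.integrableOn p hp
    have hig := hg.integrableOn p hp
    have hwf := integrableOn_min_mul_abs hif
    have hwg := integrableOn_min_mul_abs hig
    calc _ ≤ ∫ t in Ioi 0, (_root_.laplaceConv (fun s => min s 1 * |f p s|) (fun s => |g p s|) t +
            _root_.laplaceConv (fun s => |f p s|) (fun s => min s 1 * |g p s|) t) := by
          refine setIntegral_mono_on (integrableOn_min_mul_abs (integrableOn_laplaceConv hif hig))
            ((integrableOn_laplaceConv hwf hig.abs).add (integrableOn_laplaceConv hif.abs hwg))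
            measurableSet_Ioi fun t ht => ?_
          exact min_mul_abs_laplaceConv_le ht hif (hgm p) fun s hs => hB p s hp hs
      _ = (∫ t in Ioi 0, min t 1 * |f p t|) * (∫ t in Ioi 0, |g p t|) +
            (∫ t in Ioi 0, |f p t|) * ∫ t in Ioi 0, min t 1 * |g p t| := by
          rw [MeasureTheory.integral_add (integrableOn_laplaceConv hwf hig.abs)
            (integrableOn_laplaceConv hif.abs hwg), integral_laplaceConv hwf hig.abs,
            integral_laplaceConv hif.abs hwg]
      _ ≤ _ := by
          have h1 := integral_min_mul_abs_nonneg (f p)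
          have h2 := integral_min_mul_abs_nonneg (g p)
          gcongr
          · exact hCg p hp
          · exact hCf p hp

theorem IsConcentratingFamily.iterConv : ∀ (n : ℕ) {H : Fin (n + 1) → ℝ → ℝ → ℝ},
    (∀ j, IsConcentratingFamily (H j)) →
      IsConcentratingFamily fun p => iterConv n fun j => H j p
  | 0, _, hH => hH 0
  | n + 1, _, hH =>
    (IsConcentratingFamily.iterConv n fun i => hH i.castSucc).laplaceConv (hH (Fin.last (n + 1)))

theorem tendsto_integral_min_mul_abs {k : ℝ → ℝ} (hk : IntegrableOn k (Ioi 0)) :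
    Tendsto (fun ε : ℝ => ∫ s in Ioi 0, min (ε * s) 1 * |k s|) (𝓝[>] 0) (𝓝 0) := by
  have h0 : 𝓝 (∫ s in Ioi (0 : ℝ), (0 : ℝ)) = 𝓝 0 := by simp
  rw [← h0]
  refine tendsto_integral_filter_of_dominated_convergence (fun s => |k s|) ?_ ?_ hk.abs ?_
  · exact Eventually.of_forall fun ε =>
      ((measurable_const.mul measurable_id).min measurable_const).aestronglyMeasurable.mul
        hk.abs.aestronglyMeasurable
  · filter_upwards [self_mem_nhdsWithin] with ε hε
    filter_upwards [ae_restrict_mem measurableSet_Ioi] with s hs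
    have hεs : 0 ≤ ε * s := mul_nonneg (le_of_lt hε) (le_of_lt hs)
    rw [norm_mul, Real.norm_eq_abs, Real.norm_eq_abs, abs_abs,
      abs_of_nonneg (le_min hεs zero_le_one)]
    exact mul_le_of_le_one_left (abs_nonneg _) (min_le_right _ _)
  · refine Eventually.of_forall fun s => ?_
    have hc : Continuous fun ε : ℝ => min (ε * s) 1 * |k s| := by fun_prop
    have := (hc.tendsto 0).mono_left (nhdsWithin_le_nhds (s := Ioi 0))
    simpa using this

theorem rpow_mul_wrightW_eq {α l p t : ℝ} (hα0 : 0 < α) (hl : 0 < l) (hp : 0 < p) (ht : 0 < t) :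
    t ^ ((0 : ℝ) - 1) * wrightW α 0 (-(l * p) * t ^ (-α)) =
      (l * p) ^ (-(1 / α)) * stableDensity α ((l * p) ^ (-(1 / α)) * t) := by
  have hlp : 0 < l * p := mul_pos hl hp
  set c := (l * p) ^ (-(1 / α)) with hc
  have hc0 : 0 < c := Real.rpow_pos_of_pos hlp _
  have h1 : c ^ (-α) = l * p := by
    rw [hc, ← Real.rpow_mul hlp.le]
    have : -(1 / α) * -α = 1 := by field_simp
    rw [this, Real.rpow_one]
  rw [stableDensity, Real.mul_rpow hc0.le ht.le, h1, zero_sub, Real.rpow_neg_one, neg_mul,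
    mul_inv, ← mul_assoc, ← mul_assoc, mul_inv_cancel₀ hc0.ne', one_mul]

theorem isConcentratingFamily_rpow_mul_wrightW {α l : ℝ} (hα0 : 0 < α) (hα1 : α < 1)
    (hl : 0 < l) : IsConcentratingFamily
      fun p t => t ^ ((0 : ℝ) - 1) * wrightW α 0 (-(l * p) * t ^ (-α)) := by
  have hc0 : ∀ p, 0 < p → 0 < (l * p) ^ (-(1 / α)) := fun p hp =>
    Real.rpow_pos_of_pos (mul_pos hl hp) _
  have hk := integrableOn_stableDensity hα0 hα1
  have hEq : ∀ p, 0 < p → EqOn (fun t => t ^ ((0 : ℝ) - 1) * wrightW α 0 (-(l * p) * t ^ (-α)))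
      (fun t => (l * p) ^ (-(1 / α)) * stableDensity α ((l * p) ^ (-(1 / α)) * t)) (Ioi 0) :=
    fun p hp t ht => rpow_mul_wrightW_eq hα0 hl hp ht
  have hscale : ∀ (φ : ℝ → ℝ) (c : ℝ), 0 < c →
      ∫ t in Ioi 0, c * φ (c * t) = ∫ t in Ioi 0, φ t := fun φ c hc => by
    rw [MeasureTheory.integral_const_mul, integral_comp_mul_left_Ioi φ 0 hc, mul_zero,
      smul_eq_mul, mul_inv_cancel_left₀ hc.ne']
  obtain ⟨K, hK⟩ := exists_abs_stableDensity_le hα0 hα1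
  refine ⟨?_, ⟨l ^ (-(1 / α)) * K, 1 / α, ?_, ?_⟩, ?_, ⟨∫ t in Ioi 0, |stableDensity α t|, ?_⟩,
    ?_, ?_⟩
  · have hm := measurable_wrightW hα0 hα1
    unfold Function.uncurry
    exact (measurable_snd.pow_const _).mul (hm.comp
      ((measurable_const.mul measurable_fst).neg.mul (measurable_snd.pow_const _)))
  · rw [div_lt_div_iff₀ two_pos hα0]
    linarith
  · intro p t hp ht
    have hc := hc0 p hp
    rw [rpow_mul_wrightW_eq hα0 hl hp ht, abs_mul, abs_of_pos hc, mul_assoc, mul_comm K,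
      ← mul_assoc, ← Real.mul_rpow hl.le hp.le]
    gcongr
    exact hK _ (mul_pos hc ht)
  · intro p hp
    refine IntegrableOn.congr_fun ?_ (hEq p hp).symm measurableSet_Ioi
    have := (integrableOn_Ioi_comp_mul_left_iff (stableDensity α) 0 (hc0 p hp)).mpr
      (by simpa using hk)
    exact this.const_mul _
  · intro p hp
    rw [← hscale (fun t => |stableDensity α t|) _ (hc0 p hp)]
    refine (setIntegral_congr_fun measurableSet_Ioi fun t ht => ?_).le
    rw [rpow_mul_wrightW_eq hα0 hl hp ht, abs_mul, abs_of_pos (hc0 p hp)]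
  · intro p hp
    rw [setIntegral_congr_fun measurableSet_Ioi (hEq p hp), hscale _ _ (hc0 p hp),
      integral_stableDensity hα0 hα1]
  · have hε : Tendsto (fun p : ℝ => (l * p) ^ (1 / α)) (𝓝[>] 0) (𝓝[>] 0) := by
      refine tendsto_nhdsWithin_iff.mpr ⟨?_, ?_⟩
      · have hcont : Continuous fun p : ℝ => (l * p) ^ (1 / α) :=
          (Real.continuous_rpow_const (by positivity)).comp (continuous_const.mul continuous_id)
        have := (hcont.tendsto 0).mono_left (nhdsWithin_le_nhds (s := Ioi 0))
        simpa [Real.zero_rpow (by positivity : α⁻¹ ≠ 0)] using this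
      · filter_upwards [self_mem_nhdsWithin] with p hp
        exact Real.rpow_pos_of_pos (mul_pos hl hp) _
    refine ((tendsto_integral_min_mul_abs hk).comp hε).congr' ?_
    filter_upwards [self_mem_nhdsWithin] with p hp
    have hp : 0 < p := hp
    have hc := hc0 p hp
    rw [Function.comp_apply, ← hscale _ _ hc]
    refine setIntegral_congr_fun measurableSet_Ioi fun t ht => ?_
    rw [rpow_mul_wrightW_eq hα0 hl hp ht, abs_mul, abs_of_pos hc,
      ← mul_assoc ((l * p) ^ (1 / α)), ← Real.rpow_add (mul_pos hl hp), add_neg_cancel,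
      Real.rpow_zero, one_mul]
    ring

theorem isConcentratingFamily_Sconv {m : ℕ} {α lam : Fin (m + 1) → ℝ} (hpos : ∀ j, 0 < α j)
    (hlt1 : ∀ j, α j < 1) (hlam : ∀ j, 0 < lam j) :
    IsConcentratingFamily fun p => Sconv m 0 α fun j => lam j * p := by
  have h := IsConcentratingFamily.iterConv m fun j =>
    isConcentratingFamily_rpow_mul_wrightW (hpos j) (hlt1 j) (hlam j)
  simpa only [Sconv, ite_self] using h

theorem integrableOn_rpow_mul_exp_neg_div {a b : ℝ} (ha : a < -1) (hb : 0 < b) :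
    IntegrableOn (fun p : ℝ => p ^ a * rexp (-(b / p))) (Ioi 0) := by
  have h := (integrableOn_Ioi_comp_rpow_iff (fun u : ℝ => u ^ (-a - 2) * rexp (-(b * u)))
    (p := -1) (by norm_num)).mpr (integrableOn_rpow_mul_exp_neg_mul (by linarith) hb)
  refine h.congr_fun (fun p hp => ?_) measurableSet_Ioi
  have hp : (0 : ℝ) < p := hp
  have h1 : p ^ a = p ^ ((-1 : ℝ) - 1) * (p ^ (-1 : ℝ)) ^ (-a - 2) := by
    rw [← Real.rpow_mul hp.le, ← Real.rpow_add hp]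
    ring_nf
  simp only [h1, Real.rpow_neg_one, div_eq_mul_inv, abs_neg, abs_one, one_mul, smul_eq_mul]
  ring

theorem integral_rpow_mul_exp_neg_div :
    ∫ q : ℝ in Ioi 0, q ^ (-(3 / 2) : ℝ) * rexp (-(1 / 4 / q)) = 2 * √π := by
  have h := integral_comp_rpow_Ioi (fun u : ℝ => u ^ (1 / 2 - 1 : ℝ) * rexp (-(1 / 4 * u)))
    (p := -1) (by norm_num)
  rw [Real.integral_rpow_mul_exp_neg_mul_Ioi (by norm_num) (by norm_num), Real.Gamma_one_half_eq,
    one_div_one_div, ← Real.sqrt_eq_rpow, (by norm_num : (√4 : ℝ) = 2)] at h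
  rw [← h]
  refine setIntegral_congr_fun measurableSet_Ioi fun p hp => ?_
  have hp : (0 : ℝ) < p := hp
  have h1 : p ^ (-(3 / 2) : ℝ) = p ^ ((-1 : ℝ) - 1) * (p ^ (-1 : ℝ)) ^ (1 / 2 - 1 : ℝ) := by
    rw [← Real.rpow_mul hp.le, ← Real.rpow_add hp]
    norm_num
  simp only [h1, Real.rpow_neg_one, div_eq_mul_inv _ p, abs_neg, abs_one, one_mul, smul_eq_mul]
  ring

/-- The spatial derivative of `p^{-1/2} exp(-y²/(4p))`. -/
noncomputable def heatDeriv (y p : ℝ) : ℝ :=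
  p ^ (-(1 / 2) : ℝ) * (rexp (-y ^ 2 / (4 * p)) * (-(2 * y) / (4 * p)))

theorem measurable_heatDeriv (y : ℝ) : Measurable (heatDeriv y) := by
  unfold heatDeriv
  exact (measurable_id.pow_const _).mul (by fun_prop)

theorem hasDerivAt_heat (y p : ℝ) :
    HasDerivAt (fun y : ℝ => p ^ (-(1 / 2) : ℝ) * rexp (-(|y| ^ 2) / (4 * p)))
      (heatDeriv y p) y := by
  simp only [sq_abs]
  have h : HasDerivAt (fun y : ℝ => -y ^ 2 / (4 * p)) (-(2 * y) / (4 * p)) y := by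
    simpa using ((hasDerivAt_pow 2 y).neg.div_const (4 * p))
  exact h.exp.const_mul _

theorem abs_heatDeriv_mul_rpow {y p : ℝ} (β : ℝ) (hp : 0 < p) :
    |heatDeriv y p| * p ^ (-β) =
      |y| / 2 * (p ^ (-(3 / 2) - β) * rexp (-(y ^ 2 / 4 / p))) := by
  have h1 : p ^ (-(3 / 2) - β) = p ^ (-(1 / 2) : ℝ) * p⁻¹ * p ^ (-β) := by
    rw [← Real.rpow_neg_one, ← Real.rpow_add hp, ← Real.rpow_add hp]
    ring_nf
  have h2 : -y ^ 2 / (4 * p) = -(y ^ 2 / 4 / p) := by field_simp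
  rw [heatDeriv, h1, h2, abs_mul, abs_mul, abs_of_pos (Real.rpow_pos_of_pos hp _),
    abs_of_pos (Real.exp_pos _), abs_div, abs_neg, abs_mul, abs_two,
    abs_of_pos (by positivity : 0 < 4 * p)]
  field_simp
  ring

theorem integrableOn_heatDeriv_mul_rpow {y β : ℝ} (hy : y ≠ 0) (hβ : 1 / 2 < β) :
    IntegrableOn (fun p => |heatDeriv y p| * p ^ (-β)) (Ioi 0) :=
  IntegrableOn.congr_fun ((integrableOn_rpow_mul_exp_neg_div (a := -(3 / 2) - β)
    (b := y ^ 2 / 4) (by linarith) (by positivity)).const_mul (|y| / 2))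
    (fun _ hp => (abs_heatDeriv_mul_rpow β hp).symm) measurableSet_Ioi

namespace IsConcentratingFamily

variable {f : ℝ → ℝ → ℝ}

theorem hasDerivAt_integral_heat (hf : IsConcentratingFamily f) {y s : ℝ} (hy : y ≠ 0)
    (hs : 0 < s) :
    HasDerivAt (fun y => ∫ p in Ioi 0, p ^ (-(1 / 2) : ℝ) * rexp (-(|y| ^ 2) / (4 * p)) * f p s)
      (∫ p in Ioi 0, heatDeriv y p * f p s) y := by
  obtain ⟨C, β, hβ, hC⟩ := hf.bound
  have hfm : Measurable fun p => f p s := hf.measurable.comp measurable_prodMk_right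
  have hym : 0 < |y| := abs_pos.mpr hy
  have hm : ∀ z : ℝ, Measurable fun p : ℝ =>
      p ^ (-(1 / 2) : ℝ) * rexp (-(|z| ^ 2) / (4 * p)) * f p s := fun z =>
    ((measurable_id.pow_const _).mul (by fun_prop)).mul hfm
  refine (_root_.hasDerivAt_integral_of_dominated_loc_of_deriv_le
    (F := fun y p => p ^ (-(1 / 2) : ℝ) * rexp (-(|y| ^ 2) / (4 * p)) * f p s)
    (F' := fun y p => heatDeriv y p * f p s)
    (bound := fun p => C * |y| * (p ^ (-(3 / 2) - β) * rexp (-(y ^ 2 / 16 / p))))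
    (Metric.ball_mem_nhds y (half_pos hym)) (Eventually.of_forall fun z =>
      (hm z).aestronglyMeasurable) ?_
    ((measurable_heatDeriv y).mul hfm).aestronglyMeasurable ?_ ?_ ?_).2
  · refine ((integrableOn_rpow_mul_exp_neg_div (a := -(1 / 2) - β) (b := y ^ 2 / 4)
      (by linarith) (by positivity)).const_mul C).mono' (hm y).aestronglyMeasurable ?_
    filter_upwards [ae_restrict_mem measurableSet_Ioi] with p hp
    have hp : 0 < p := hp
    have h2 : -|y| ^ 2 / (4 * p) = -(y ^ 2 / 4 / p) := by rw [sq_abs]; field_simp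
    have h3 : p ^ (-(1 / 2) - β) = p ^ (-(1 / 2) : ℝ) * p ^ (-β) := by
      rw [← Real.rpow_add hp]; ring_nf
    rw [norm_mul, norm_mul, Real.norm_of_nonneg (Real.rpow_nonneg hp.le _),
      Real.norm_of_nonneg (Real.exp_pos _).le, Real.norm_eq_abs, h2, h3]
    calc _ ≤ p ^ (-(1 / 2) : ℝ) * rexp (-(y ^ 2 / 4 / p)) * (C * p ^ (-β)) := by
          gcongr; exact hC p s hp hs
      _ = _ := by ring
  · filter_upwards [ae_restrict_mem measurableSet_Ioi] with p hp z hz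
    have hp : 0 < p := hp
    have hC0 : 0 ≤ C := nonneg_of_mul_nonneg_left ((abs_nonneg _).trans (hC p s hp hs))
      (Real.rpow_pos_of_pos hp _)
    rw [Metric.mem_ball, Real.dist_eq] at hz
    have h1 : |z| ≤ 2 * |y| := by
      have := abs_add_le (z - y) y
      rw [sub_add_cancel] at this
      linarith
    have h2 : |y| / 2 ≤ |z| := by
      have := abs_add_le (y - z) z
      rw [sub_add_cancel, abs_sub_comm] at this
      linarith
    have h3 : y ^ 2 / 16 ≤ z ^ 2 / 4 := by
      rw [← sq_abs y, ← sq_abs z]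
      nlinarith
    calc ‖heatDeriv z p * f p s‖ = |heatDeriv z p| * |f p s| := by rw [norm_mul]; rfl
      _ ≤ |heatDeriv z p| * (C * p ^ (-β)) := by gcongr; exact hC p s hp hs
      _ = C * (|heatDeriv z p| * p ^ (-β)) := by ring
      _ = C * (|z| / 2 * (p ^ (-(3 / 2) - β) * rexp (-(z ^ 2 / 4 / p)))) := by
        rw [abs_heatDeriv_mul_rpow β hp]
      _ ≤ C * (|y| * (p ^ (-(3 / 2) - β) * rexp (-(y ^ 2 / 16 / p)))) := by
        gcongr
        linarith
      _ = _ := by ring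
  · exact (integrableOn_rpow_mul_exp_neg_div (by linarith) (by positivity)).const_mul _
  · exact Eventually.of_forall fun p z _ => (hasDerivAt_heat z p).mul_const _

theorem integral_integral_heatDeriv_mul (hf : IsConcentratingFamily f) {y : ℝ} (hy : y ≠ 0)
    (δ : ℝ) :
    ∫ s in Ioo 0 δ, ∫ p in Ioi 0, heatDeriv y p * f p s =
      ∫ p in Ioi 0, heatDeriv y p * ∫ s in Ioo 0 δ, f p s := by
  obtain ⟨C, β, hβ, hC⟩ := hf.bound
  have hmeas : Measurable (Function.uncurry fun s p => heatDeriv y p * f p s) :=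
    ((measurable_heatDeriv y).comp measurable_snd).mul (hf.measurable.comp measurable_swap)
  have hint : Integrable (Function.uncurry fun s p => heatDeriv y p * f p s)
      ((volume.restrict (Ioo 0 δ)).prod (volume.restrict (Ioi 0))) := by
    have hone : Integrable (fun _ : ℝ => (1 : ℝ)) (volume.restrict (Ioo 0 δ)) :=
      integrable_const _
    refine (hone.mul_prod ((integrableOn_heatDeriv_mul_rpow hy hβ).const_mul C)).mono'
      hmeas.aestronglyMeasurable ?_
    rw [Measure.prod_restrict]
    filter_upwards [ae_restrict_mem (measurableSet_Ioo.prod measurableSet_Ioi)] with z hz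
    have hp : 0 < z.2 := hz.2
    calc ‖heatDeriv y z.2 * f z.2 z.1‖ = |heatDeriv y z.2| * |f z.2 z.1| := by
          rw [norm_mul]; rfl
      _ ≤ |heatDeriv y z.2| * (C * z.2 ^ (-β)) := by gcongr; exact hC _ _ hp hz.1.1
      _ = _ := by ring
  rw [integral_integral_swap hint]
  simp only [MeasureTheory.integral_const_mul]

theorem abs_integral_Ioo_le (hf : IsConcentratingFamily f) :
    ∃ C, ∀ δ p, 0 < p → |∫ s in Ioo 0 δ, f p s| ≤ C := by
  obtain ⟨C, hC⟩ := hf.norm_le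
  refine ⟨C, fun δ p hp => abs_integral_le_integral_abs.trans (le_trans ?_ (hC p hp))⟩
  exact setIntegral_mono_set (hf.integrableOn p hp).abs
    (Eventually.of_forall fun s => abs_nonneg _)
    (Eventually.of_forall fun s (hs : s ∈ Ioo 0 δ) => hs.1)

theorem tendsto_integral_Ioo (hf : IsConcentratingFamily f) {δ : ℝ} (hδ : 0 < δ) :
    Tendsto (fun p => ∫ s in Ioo 0 δ, f p s) (𝓝[>] 0) (𝓝 1) := by
  have hmin : 0 < min δ 1 := lt_min hδ one_pos
  rw [tendsto_iff_dist_tendsto_zero]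
  have hlim := hf.tendsto.const_mul (min δ 1)⁻¹
  rw [mul_zero] at hlim
  refine squeeze_zero' (Eventually.of_forall fun p => dist_nonneg) ?_ hlim
  filter_upwards [self_mem_nhdsWithin] with p hp
  have hp : 0 < p := hp
  have hi := hf.integrableOn p hp
  have hsub : Ici δ ⊆ Ioi 0 := fun s hs => hδ.trans_le hs
  have hunion : Ioo 0 δ ∪ Ici δ = Ioi 0 := Ioo_union_Ici_eq_Ioi hδ
  have hsplit : ∫ s in Ioo 0 δ, f p s = 1 - ∫ s in Ici δ, f p s := by
    rw [← hf.integral_eq_one p hp, ← hunion, setIntegral_union _ measurableSet_Ici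
      (hi.mono_set fun s hs => hs.1) (hi.mono_set hsub), add_sub_cancel_right]
    exact Set.disjoint_left.mpr fun s hs hs' => absurd hs.2 (not_lt.mpr hs')
  rw [hsplit, Real.dist_eq, sub_sub_cancel_left, abs_neg, ← MeasureTheory.integral_const_mul]
  have hwi := (integrableOn_min_mul_abs hi).const_mul (min δ 1)⁻¹
  calc |∫ s in Ici δ, f p s| ≤ ∫ s in Ici δ, |f p s| := abs_integral_le_integral_abs
    _ ≤ ∫ s in Ici δ, (min δ 1)⁻¹ * (min s 1 * |f p s|) := by
      refine setIntegral_mono_on (hi.mono_set hsub).abs (IntegrableOn.mono_set hwi hsub)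
        measurableSet_Ici fun s hs => ?_
      have hs : δ ≤ s := hs
      rw [← mul_assoc, inv_mul_eq_div]
      refine le_mul_of_one_le_left (abs_nonneg _) ((one_le_div hmin).mpr ?_)
      exact min_le_min_right 1 hs
    _ ≤ _ := by
      refine setIntegral_mono_set hwi ?_ (Eventually.of_forall hsub)
      filter_upwards [ae_restrict_mem measurableSet_Ioi] with s hs
      have hs : 0 < s := hs
      have : 0 ≤ min s 1 := le_min hs.le zero_le_one
      simp only [Pi.zero_apply]
      positivity

theorem integral_heatDeriv_mul (F : ℝ → ℝ) {y : ℝ} (hy : y ≠ 0) :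
    ∫ p in Ioi 0, heatDeriv y p * F p = -(y / |y|) / 2 *
      ∫ q in Ioi 0, q ^ (-(3 / 2) : ℝ) * rexp (-(1 / 4 / q)) * F (y ^ 2 * q) := by
  have hy2 : 0 < y ^ 2 := by positivity
  have hym : 0 < |y| := abs_pos.mpr hy
  have h := integral_comp_mul_left_Ioi (fun p => heatDeriv y p * F p) 0 hy2
  rw [mul_zero, smul_eq_mul, eq_inv_mul_iff_mul_eq₀ hy2.ne'] at h
  rw [← h, ← MeasureTheory.integral_const_mul, ← MeasureTheory.integral_const_mul]
  refine setIntegral_congr_fun measurableSet_Ioi fun q hq => ?_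
  have hq : 0 < q := hq
  have h1 : (y ^ 2 * q) ^ (-(1 / 2) : ℝ) = |y|⁻¹ * q ^ (-(1 / 2) : ℝ) := by
    rw [Real.mul_rpow hy2.le hq.le, Real.rpow_neg hy2.le, ← Real.sqrt_eq_rpow, Real.sqrt_sq_eq_abs]
  have h2 : q ^ (-(3 / 2) : ℝ) = q ^ (-(1 / 2) : ℝ) * q⁻¹ := by
    rw [← Real.rpow_neg_one, ← Real.rpow_add hq]
    norm_num
  have h3 : -y ^ 2 / (4 * (y ^ 2 * q)) = -(1 / 4 / q) := by field_simp
  rw [heatDeriv, h1, h2, h3]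
  field_simp
  ring

theorem tendsto_integral_heat (hf : IsConcentratingFamily f) {δ : ℝ} (hδ : 0 < δ) :
    Tendsto (fun y : ℝ => ∫ q in Ioi 0, q ^ (-(3 / 2) : ℝ) * rexp (-(1 / 4 / q)) *
      ∫ s in Ioo 0 δ, f (y ^ 2 * q) s) (𝓝[≠] 0) (𝓝 (2 * √π)) := by
  obtain ⟨C, hC⟩ := hf.abs_integral_Ioo_le
  have hI := integrableOn_rpow_mul_exp_neg_div (a := -(3 / 2)) (b := 1 / 4) (by norm_num)
    (by norm_num)
  have hF : Measurable fun p => ∫ s in Ioo 0 δ, f p s :=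
    hf.measurable.stronglyMeasurable.integral_prod_right.measurable
  rw [← integral_rpow_mul_exp_neg_div]
  refine tendsto_integral_filter_of_dominated_convergence
    (fun q => q ^ (-(3 / 2) : ℝ) * rexp (-(1 / 4 / q)) * C) ?_ ?_ (hI.mul_const C) ?_
  · exact Eventually.of_forall fun y => hI.aestronglyMeasurable.mul
      (hF.comp (measurable_const.mul measurable_id)).aestronglyMeasurable
  · filter_upwards [self_mem_nhdsWithin] with y hy
    filter_upwards [ae_restrict_mem measurableSet_Ioi] with q hq
    have hq : 0 < q := hq
    have hy : y ≠ 0 := hy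
    have h0 : 0 ≤ q ^ (-(3 / 2) : ℝ) * rexp (-(1 / 4 / q)) := by positivity
    rw [norm_mul, Real.norm_of_nonneg h0]
    gcongr
    exact hC δ _ (by positivity)
  · filter_upwards [ae_restrict_mem measurableSet_Ioi] with q hq
    have hq : 0 < q := hq
    have hlim : Tendsto (fun y : ℝ => y ^ 2 * q) (𝓝[≠] 0) (𝓝[>] 0) := by
      refine tendsto_nhdsWithin_iff.mpr ⟨?_, ?_⟩
      · have hcont : Continuous fun y : ℝ => y ^ 2 * q := by fun_prop
        simpa using (hcont.tendsto 0).mono_left (nhdsWithin_le_nhds (s := {0}ᶜ))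
      · filter_upwards [self_mem_nhdsWithin] with y hy
        have hy : y ≠ 0 := hy
        exact mem_Ioi.mpr (by positivity)
    simpa using ((hf.tendsto_integral_Ioo hδ).comp hlim).const_mul
      (q ^ (-(3 / 2) : ℝ) * rexp (-(1 / 4 / q)))

end IsConcentratingFamily

theorem integral_kerEx_eq {m : ℕ} {α lam : Fin (m + 1) → ℝ} (hpos : ∀ j, 0 < α j)
    (hlt1 : ∀ j, α j < 1) (hlam : ∀ j, 0 < lam j) {x a t δ : ℝ} (hδ : 0 < δ) (hx : x - a ≠ 0) :
    ∫ τ in (t - δ)..t, kerEx m α lam (x - a) (t - τ) =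
      -((x - a) / |x - a|) / 2 * ((4 * π) ^ (-(1 / 2) : ℝ) *
        ∫ q in Ioi 0, q ^ (-(3 / 2) : ℝ) * rexp (-(1 / 4 / q)) *
          ∫ s in Ioo 0 δ, Sconv m 0 α (fun j => lam j * ((x - a) ^ 2 * q)) s) := by
  have hf := isConcentratingFamily_Sconv hpos hlt1 hlam
  have hker : ∀ s ∈ Ioo 0 δ, kerEx m α lam (x - a) s = (4 * π) ^ (-(1 / 2) : ℝ) *
      ∫ p in Ioi 0, heatDeriv (x - a) p * Sconv m 0 α (fun j => lam j * p) s := fun s hs =>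
    ((hf.hasDerivAt_integral_heat hx hs.1).const_mul _).deriv
  rw [intervalIntegral.integral_comp_sub_left (fun s => kerEx m α lam (x - a) s) t, sub_self,
    sub_sub_cancel, intervalIntegral.integral_of_le hδ.le, integral_Ioc_eq_integral_Ioo,
    setIntegral_congr_fun measurableSet_Ioo hker, MeasureTheory.integral_const_mul,
    hf.integral_integral_heatDeriv_mul hx, IsConcentratingFamily.integral_heatDeriv_mul _ hx]
  ring

theorem tendsto_normalized_integral {m : ℕ} {α lam : Fin (m + 1) → ℝ} (hpos : ∀ j, 0 < α j)
    (hlt1 : ∀ j, α j < 1) (hlam : ∀ j, 0 < lam j) (a : ℝ) {δ : ℝ} (hδ : 0 < δ) :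
    Tendsto (fun x => (4 * π) ^ (-(1 / 2) : ℝ) *
        ∫ q in Ioi 0, q ^ (-(3 / 2) : ℝ) * rexp (-(1 / 4 / q)) *
          ∫ s in Ioo 0 δ, Sconv m 0 α (fun j => lam j * ((x - a) ^ 2 * q)) s)
      (𝓝[≠] a) (𝓝 1) := by
  have hsub : Tendsto (fun x => x - a) (𝓝[≠] a) (𝓝[≠] 0) := by
    refine tendsto_nhdsWithin_iff.mpr ⟨?_, ?_⟩
    · have hcont : Continuous fun x : ℝ => x - a := by fun_prop
      simpa using (hcont.tendsto a).mono_left (nhdsWithin_le_nhds (s := {a}ᶜ))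
    · filter_upwards [self_mem_nhdsWithin] with x hx
      exact sub_ne_zero.mpr hx
  have h1 : (4 * π) ^ (-(1 / 2) : ℝ) * (2 * √π) = 1 := by
    rw [Real.rpow_neg (by positivity), ← Real.sqrt_eq_rpow, Real.sqrt_mul (by norm_num),
      show (4 : ℝ) = 2 ^ 2 by norm_num, Real.sqrt_sq (by norm_num)]
    exact inv_mul_cancel₀ (by positivity)
  have h2 := (((isConcentratingFamily_Sconv hpos hlt1 hlam).tendsto_integral_heat hδ).comp
    hsub).const_mul ((4 * π) ^ (-(1 / 2) : ℝ))
  rwa [h1] at h2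

/-- One-sided limits of the truncated single-layer integral of `E_x`:
as `x → a⁻` the integral `∫_{t-δ}^t E_x(x-a, t-τ) dτ` tends to `1/2`, and as
`x → a⁺` it tends to `-1/2`. -/
theorem truncated_layer_limits
    (m : ℕ) (α lam : Fin (m + 1) → ℝ)
    (hmono : StrictMono α) (hpos : ∀ j, 0 < α j) (hlt1 : ∀ j, α j < 1)
    (hlam : ∀ j, 0 < lam j)
    (a t δ : ℝ) (ht : 0 < t) (hδ : δ ∈ Set.Ioo 0 t) :
    Tendsto (fun x => ∫ τ in (t - δ)..t, kerEx m α lam (x - a) (t - τ))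
      (𝓝[<] a) (𝓝 (1/2)) ∧
    Tendsto (fun x => ∫ τ in (t - δ)..t, kerEx m α lam (x - a) (t - τ))
      (𝓝[>] a) (𝓝 (-(1/2))) := by
  have hlim := tendsto_normalized_integral hpos hlt1 hlam a hδ.1
  constructor
  · have h := (hlim.mono_left (nhdsLT_le_nhdsNE a)).const_mul (1 / 2)
    rw [mul_one] at h
    refine h.congr' ?_
    filter_upwards [self_mem_nhdsWithin] with x hx
    have hxa : x - a < 0 := sub_neg.mpr hx
    rw [integral_kerEx_eq hpos hlt1 hlam hδ.1 hxa.ne, abs_of_neg hxa, div_neg,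
      div_self hxa.ne, neg_neg]
  · have h := (hlim.mono_left (nhdsGT_le_nhdsNE a)).const_mul (-(1 / 2))
    rw [mul_one] at h
    refine h.congr' ?_
    filter_upwards [self_mem_nhdsWithin] with x hx
    have hxa : 0 < x - a := sub_pos.mpr hx
    rw [integral_kerEx_eq hpos hlt1 hlam hδ.1 hxa.ne', abs_of_pos hxa, div_self hxa.ne',
      neg_div]
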